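/- Let G be a group with a T-valued 2-cocycle c, S an abelian subgroup on which c is symmetric, and η ∈ G an element commuting with all elements of S and satisfying c(s,η) = c(η,s) for all s ∈ S. Then for all s, t ∈ S and all nonnegative integers n, k, one has c(sη^k, tη^n) = c(tη^n, sη^k). -/

import Mathlib

/-- If `η` commutes with all of the abelian subgroup `S` (on which `c` is symmetric)
and `c(s, η) = c(η, s)` for all `s ∈ S`, then `c(sη^k, tη^n) = c(tη^n, sη^k)`
for all `s, t ∈ S` and nonnegative integers `n, k`. -/
theorem cocycle_sym_on_powers {G : Type*} [Group G] (c : G → G → Circle)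
    (hc_right : ∀ g : G, c g 1 = 1) (hc_left : ∀ g : G, c 1 g = 1)
    (hc : ∀ g h k : G, c g (h * k) * c h k = c (g * h) k * c g h)
    (S : Subgroup G)
    (hab : ∀ s ∈ S, ∀ t ∈ S, s * t = t * s)
    (hsym : ∀ s ∈ S, ∀ t ∈ S, c s t = c t s)
    (η : G)
    (hcomm : ∀ s ∈ S, η * s = s * η)
    (hcsym : ∀ s ∈ S, c s η = c η s) :
    ∀ s ∈ S, ∀ t ∈ S, ∀ n k : ℕ,
      c (s * η ^ k) (t * η ^ n) = c (t * η ^ n) (s * η ^ k) := by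
  have mulR : ∀ a x y : G, (a * x = x * a ∧ c a x = c x a) → (a * y = y * a ∧ c a y = c y a) →
      (a * (x * y) = (x * y) * a ∧ c a (x * y) = c (x * y) a) := by
    rintro a x y ⟨h1, h2⟩ ⟨h3, h4⟩
    refine ⟨by rw [← mul_assoc, h1, mul_assoc, h3, mul_assoc], ?_⟩
    have e1 := hc a x y
    have e2 := hc x y a
    have e3 := hc x a y
    rw [← h3, ← h4, e3, ← h1, ← h2, ← e1] at e2
    exact mul_right_cancel e2
  have powR : ∀ a x : G, (a * x = x * a ∧ c a x = c x a) → ∀ n : ℕ,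
      (a * x ^ n = x ^ n * a ∧ c a (x ^ n) = c (x ^ n) a) := by
    intro a x h n
    induction n with
    | zero => simp [hc_right, hc_left]
    | succ n ih => rw [pow_succ]; exact mulR a _ _ ih h
  have sy : ∀ a x : G, (a * x = x * a ∧ c a x = c x a) → (x * a = a * x ∧ c x a = c a x) :=
    fun a x h => ⟨h.1.symm, h.2.symm⟩
  intro s hs t ht n k
  have key : ∀ a : G, (a * t = t * a ∧ c a t = c t a) → (a * η = η * a ∧ c a η = c η a) →
      (a * (t * η ^ n) = (t * η ^ n) * a ∧ c a (t * η ^ n) = c (t * η ^ n) a) :=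
    fun a h1 h2 => mulR a _ _ h1 (powR a η h2 n)
  have ks := key s ⟨hab s hs t ht, hsym s hs t ht⟩ ⟨(hcomm s hs).symm, hcsym s hs⟩
  have ke := key η ⟨hcomm t ht, (hcsym t ht).symm⟩ ⟨rfl, rfl⟩
  exact (mulR _ _ _ (sy _ _ ks) (powR _ _ (sy _ _ ke) k)).2.symm
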